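/- arXiv:1110.4273 — 2 statements merged into one kernel-verified Lean document; each statement's English description precedes it below -/
import Mathlib

section
/- Let f : (C^n,0) → (C,0), n ≥ 2, be a singularity (f(0)=0, ∇f(0)=0) and let φ = (φ_1,...,φ_n) ∈ C{t}^n be a parametrization with φ(0)=0 and φ_i ≠ 0 for all i. Set w_i = ord φ_i and let S = Δ(w, Γ_+(f)) be the compact face of Γ(f) supported by w. If I := {i : (∂f/∂z_i)∘φ = 0} is nonempty, then (∂f_S/∂z_i)∘(in φ) = 0 for every i ∈ I, where f_S is the quasihomogeneous polynomial consisting of the terms of f on the face S and in φ = (in φ_1,...,in φ_n) are the initial terms of the coordinates of φ. -/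
/-!
Scaling argument. Write `φ_j(t) = t ^ w_j * ψ_j(t)` with `ψ_j(0)` the initial coefficient, and let
`l` be the minimum of the weight `⟨w, ·⟩` on the Newton diagram. The germ `f - f_S` has no Taylor
coefficient of weight at most `l`, so `∂_i (f - f_S)` has none of weight below `l + 1 - w_i`.
`weighted_bound` turns this into `t ^ w_i * ∂_i (f - f_S)(t ^ w * z) = O(t ^ (l + 1))`, uniformly
for bounded `z`; it is proved by induction on the weight from the mean value inequality, without
any multivariate Taylor expansion.

Take `z = Z(t)` with `Z_j(t) = t₀ ^ w_j * ψ_j(t t₀)`, so that `t ^ w * Z(t) = φ(t t₀)`. There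
`∂_i f` vanishes, while `t ^ w_i * ∂_i f_S(t ^ w * Z(t)) = t ^ l * ∂_i f_S(Z(t))` because `f_S` is
quasihomogeneous of weight `l` (`eval_pderiv_scaling`). Hence `∂_i f_S(Z(t)) = O(t)`, and letting
`t → 0` gives `∂_i f_S(in φ(t₀)) = 0`. This treats `w_i > l` and `t₀ = 0` without distinction.
-/

open Finset Filter Topology

/-- The `i`-th partial derivative of `f`. -/
noncomputable def pder {n : ℕ} (i : Fin n) (f : (Fin n → ℂ) → ℂ) : (Fin n → ℂ) → ℂ :=
  fun z => fderiv ℂ f z (Pi.single i 1)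

/-- The iterated partial derivative `∂^ν f` for a multi-index `ν`. -/
noncomputable def mder {n : ℕ} (ν : Fin n → ℕ) (f : (Fin n → ℂ) → ℂ) : (Fin n → ℂ) → ℂ :=
  ((List.finRange n).map fun i => (pder i)^[ν i]).foldr (fun g acc => g acc) f

/-- The support of the Taylor expansion of `f` at `0`. -/
def NSupp {n : ℕ} (f : (Fin n → ℂ) → ℂ) : Set (Fin n → ℕ) :=
  {ν | mder ν f 0 ≠ 0}

/-- The Taylor coefficient `a_ν` of `f` at `0`. -/
noncomputable def coeffOf {n : ℕ} (f : (Fin n → ℂ) → ℂ) (ν : Fin n → ℕ) : ℂ :=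
  mder ν f 0 / ((∏ i, (ν i).factorial : ℕ) : ℂ)

/-- The Newton diagram `Γ₊(f)`: the convex hull of `⋃_{ν ∈ supp f} (ν + ℝ₊ⁿ)`. -/
def NDiag {n : ℕ} (f : (Fin n → ℂ) → ℂ) : Set (Fin n → ℝ) :=
  convexHull ℝ {x | ∃ ν ∈ NSupp f, ∀ i, (ν i : ℝ) ≤ x i}

/-- `l(u, A) = inf {⟨u, v⟩ : v ∈ A}`. -/
noncomputable def ell {n : ℕ} (u : Fin n → ℝ) (A : Set (Fin n → ℝ)) : ℝ :=
  sInf ((fun v => ∑ i, u i * v i) '' A)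

/-- The face `Δ(u, A) = {v ∈ A : ⟨u, v⟩ = l(u, A)}`. -/
def faceOf {n : ℕ} (u : Fin n → ℝ) (A : Set (Fin n → ℝ)) : Set (Fin n → ℝ) :=
  {v | v ∈ A ∧ ∑ i, u i * v i = ell u A}

/-- `S` is a compact face of the Newton diagram of `f` (member of the Newton boundary). -/
def IsCompactFace {n : ℕ} (f : (Fin n → ℂ) → ℂ) (S : Set (Fin n → ℝ)) : Prop :=
  ∃ u : Fin n → ℝ, (∀ i, 0 < u i) ∧ S = faceOf u (NDiag f)

/-- The dimension of a face, as the rank of the direction of its affine span. -/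
noncomputable def faceDim {n : ℕ} (S : Set (Fin n → ℝ)) : ℕ :=
  Module.finrank ℝ (affineSpan ℝ S).direction

/-- `Γ^k(f)`: the `k`-dimensional compact faces of the Newton boundary of `f`. -/
def GammaK {n : ℕ} (f : (Fin n → ℂ) → ℂ) (k : ℕ) : Set (Set (Fin n → ℝ)) :=
  {S | IsCompactFace f S ∧ faceDim S = k}

/-- The quasihomogeneous polynomial `f_S = Σ_{ν ∈ S} a_ν z^ν`. -/
noncomputable def facePoly {n : ℕ} (f : (Fin n → ℂ) → ℂ) (S : Set (Fin n → ℝ)) :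
    (Fin n → ℂ) → ℂ :=
  fun z => ∑' ν : {ν : Fin n → ℕ // (fun i => (ν i : ℝ)) ∈ S}, coeffOf f ν.1 * ∏ i, z i ^ ν.1 i

/-- `f` is nondegenerate in the Kouchnirenko sense. -/
def Nondeg {n : ℕ} (f : (Fin n → ℂ) → ℂ) : Prop :=
  ∀ S, IsCompactFace f S →
    ¬∃ z : Fin n → ℂ, (∀ i, z i ≠ 0) ∧ ∀ i, pder i (facePoly f S) z = 0

/-- `f` is a singularity: a nonzero holomorphic germ with `f 0 = 0`, `∇f 0 = 0`. -/
def IsSing {n : ℕ} (f : (Fin n → ℂ) → ℂ) : Prop :=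
  AnalyticAt ℂ f 0 ∧ (¬∀ᶠ z in 𝓝 0, f z = 0) ∧ f 0 = 0 ∧ ∀ i, pder i f 0 = 0

/-- `f` is an isolated singularity: `∇f` has an isolated zero at `0`. -/
def IsIsolSing {n : ℕ} (f : (Fin n → ℂ) → ℂ) : Prop :=
  IsSing f ∧ ∃ r > (0 : ℝ), ∀ z : Fin n → ℂ, ‖z‖ < r → z ≠ 0 → ∃ i, pder i f z ≠ 0

/-- The order of a one-variable holomorphic germ at `0`. -/
noncomputable def ord1 (φ : ℂ → ℂ) : ℕ := sInf {m | iteratedDeriv m φ 0 ≠ 0}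

/-- The initial term `in φ = c·t^{ord φ}` of a one-variable holomorphic germ. -/
noncomputable def ini1 (φ : ℂ → ℂ) : ℂ → ℂ :=
  fun t => (iteratedDeriv (ord1 φ) φ 0 / ((ord1 φ).factorial : ℂ)) * t ^ ord1 φ

/-- `φ` is a parametrization with all coordinates nonzero: each `φ i` is holomorphic
at `0`, vanishes at `0`, and is not identically zero near `0`. -/
def IsParam {n : ℕ} (φ : Fin n → ℂ → ℂ) : Prop :=
  ∀ i, AnalyticAt ℂ (φ i) 0 ∧ φ i 0 = 0 ∧ ¬∀ᶠ t in 𝓝 (0 : ℂ), φ i t = 0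

/-- The iterated derivative along the directions of a list `L`, with multiplicities `ν`, so that
`mder ν f` is the case of the list of all directions. It serves inductions on the list. -/
noncomputable def lder {n : ℕ} (L : List (Fin n)) (ν : Fin n → ℕ) (f : (Fin n → ℂ) → ℂ) :
    (Fin n → ℂ) → ℂ :=
  (L.map fun i => (pder i)^[ν i]).foldr (fun g acc => g acc) f

lemma mder_eq_lder {n : ℕ} (ν : Fin n → ℕ) (f : (Fin n → ℂ) → ℂ) :
    mder ν f = lder (List.finRange n) ν f := rfl

lemma lder_nil {n : ℕ} (ν : Fin n → ℕ) (f : (Fin n → ℂ) → ℂ) : lder [] ν f = f := rfl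

lemma lder_cons {n : ℕ} (a : Fin n) (L : List (Fin n)) (ν : Fin n → ℕ) (f : (Fin n → ℂ) → ℂ) :
    lder (a :: L) ν f = (pder a)^[ν a] (lder L ν f) := rfl

/-! ### Iterated partial derivatives of analytic germs -/

section
variable {n : ℕ} {f g : (Fin n → ℂ) → ℂ} {x : Fin n → ℂ}

lemma pder_congr (i : Fin n) (h : f =ᶠ[𝓝 x] g) : pder i f =ᶠ[𝓝 x] pder i g := by
  filter_upwards [h.fderiv (𝕜 := ℂ)] with z hz
  simp only [pder, hz]

lemma pder_iter_congr (i : Fin n) (k : ℕ) (h : f =ᶠ[𝓝 x] g) :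
    (pder i)^[k] f =ᶠ[𝓝 x] (pder i)^[k] g := by
  induction k with
  | zero => exact h
  | succ k ih =>
    rw [Function.iterate_succ_apply', Function.iterate_succ_apply']
    exact pder_congr i ih

lemma pder_analyticAt (i : Fin n) (hf : AnalyticAt ℂ f x) : AnalyticAt ℂ (pder i f) x :=
  (ContinuousLinearMap.apply ℂ ℂ (Pi.single i (1 : ℂ) : Fin n → ℂ)).analyticAt _ |>.comp hf.fderiv

lemma pder_iter_analyticAt (i : Fin n) (k : ℕ) (hf : AnalyticAt ℂ f x) :
    AnalyticAt ℂ ((pder i)^[k] f) x := by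
  induction k with
  | zero => exact hf
  | succ k ih =>
    rw [Function.iterate_succ_apply']
    exact pder_analyticAt i ih

lemma lder_analyticAt (L : List (Fin n)) (ν : Fin n → ℕ) (hf : AnalyticAt ℂ f x) :
    AnalyticAt ℂ (lder L ν f) x := by
  induction L with
  | nil => exact hf
  | cons a L ih => exact pder_iter_analyticAt a _ ih

lemma pder_comm (i j : Fin n) (hf : AnalyticAt ℂ f x) :
    pder i (pder j f) =ᶠ[𝓝 x] pder j (pder i f) := by
  filter_upwards [hf.eventually_analyticAt] with z hz
  have key : ∀ a b : Fin n, pder a (pder b f) z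
      = fderiv ℂ (fderiv ℂ f) z (Pi.single a 1) (Pi.single b 1) := by
    intro a b
    have h1 : HasFDerivAt (fderiv ℂ f) (fderiv ℂ (fderiv ℂ f) z) z :=
      hz.fderiv.differentiableAt.hasFDerivAt
    have h2 := h1.clm_apply (hasFDerivAt_const (Pi.single b (1 : ℂ)) z)
    have h3 : fderiv ℂ (pder b f) z = _ := h2.fderiv
    simp only [pder] at h3 ⊢
    rw [h3]
    simp
  rw [key, key]
  exact (hz.contDiffAt (n := ⊤)).isSymmSndFDerivAt_of_omega _ _

lemma pder_iter_comm (i j : Fin n) (k : ℕ) (hf : AnalyticAt ℂ f x) :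
    (pder i)^[k] (pder j f) =ᶠ[𝓝 x] pder j ((pder i)^[k] f) := by
  induction k with
  | zero => rfl
  | succ k ih =>
    rw [Function.iterate_succ_apply', Function.iterate_succ_apply']
    exact (pder_congr i ih).trans (pder_comm i j (pder_iter_analyticAt i k hf))

lemma lder_pder_comm (L : List (Fin n)) (ν : Fin n → ℕ) (j : Fin n) (hf : AnalyticAt ℂ f x) :
    lder L ν (pder j f) =ᶠ[𝓝 x] pder j (lder L ν f) := by
  induction L with
  | nil => rfl
  | cons a L ih =>
    rw [lder_cons, lder_cons]
    exact (pder_iter_congr a _ ih).trans (pder_iter_comm a j _ (lder_analyticAt L ν hf))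

lemma lder_congr_index (L : List (Fin n)) {ν μ : Fin n → ℕ} (h : ∀ a ∈ L, ν a = μ a) :
    lder L ν f = lder L μ f := by
  induction L with
  | nil => rfl
  | cons a L ih =>
    rw [lder_cons, lder_cons, ih fun b hb => h b (List.mem_cons_of_mem _ hb),
      h a List.mem_cons_self]

lemma lder_add_single (L : List (Fin n)) (hL : L.Nodup) (ν : Fin n → ℕ) (j : Fin n) (hj : j ∈ L)
    (hf : AnalyticAt ℂ f x) :
    lder L (ν + Pi.single j 1) f =ᶠ[𝓝 x] pder j (lder L ν f) := by
  induction L with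
  | nil => simp at hj
  | cons a L ih =>
    rw [List.nodup_cons] at hL
    rw [lder_cons, lder_cons]
    by_cases haj : a = j
    · subst haj
      have : lder L (ν + Pi.single a 1) f = lder L ν f := by
        refine lder_congr_index L fun b hb => ?_
        have : b ≠ a := fun h => hL.1 (h ▸ hb)
        simp [this]
      rw [this]
      simp only [Pi.add_apply, Pi.single_eq_same, Function.iterate_succ_apply']
      rfl
    · have hjL : j ∈ L := by simpa [Ne.symm haj] using hj
      have : (ν + Pi.single j 1 : Fin n → ℕ) a = ν a := by simp [haj]
      rw [this]
      exact (pder_iter_congr a _ (ih hL.2 hjL)).trans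
        (pder_iter_comm a j _ (lder_analyticAt L ν hf))

/-- The Taylor coefficients of a partial derivative are, up to factorials, shifted Taylor
coefficients. -/
lemma mder_pder (ν : Fin n → ℕ) (j : Fin n) (hf : AnalyticAt ℂ f x) :
    mder ν (pder j f) x = mder (ν + Pi.single j 1) f x := by
  have h1 := lder_pder_comm (List.finRange n) ν j hf
  have h2 := lder_add_single (List.finRange n) (List.nodup_finRange n) ν j (List.mem_finRange j) hf
  exact (h1.trans h2.symm).eq_of_nhds

lemma pder_sub (i : Fin n) (hf : AnalyticAt ℂ f x) (hg : AnalyticAt ℂ g x) :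
    pder i (f - g) =ᶠ[𝓝 x] pder i f - pder i g := by
  filter_upwards [hf.eventually_analyticAt, hg.eventually_analyticAt] with z hz hz'
  simp [pder, fderiv_sub hz.differentiableAt hz'.differentiableAt]

lemma pder_iter_sub (i : Fin n) (k : ℕ) (hf : AnalyticAt ℂ f x) (hg : AnalyticAt ℂ g x) :
    (pder i)^[k] (f - g) =ᶠ[𝓝 x] (pder i)^[k] f - (pder i)^[k] g := by
  induction k with
  | zero => rfl
  | succ k ih =>
    simp only [Function.iterate_succ_apply']
    exact (pder_congr i ih).trans
      (pder_sub i (pder_iter_analyticAt i k hf) (pder_iter_analyticAt i k hg))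

lemma lder_sub (L : List (Fin n)) (ν : Fin n → ℕ) (hf : AnalyticAt ℂ f x)
    (hg : AnalyticAt ℂ g x) : lder L ν (f - g) =ᶠ[𝓝 x] lder L ν f - lder L ν g := by
  induction L with
  | nil => rfl
  | cons a L ih =>
    simp only [lder_cons]
    exact (pder_iter_congr a _ ih).trans
      (pder_iter_sub a _ (lder_analyticAt L ν hf) (lder_analyticAt L ν hg))

lemma mder_zero (f : (Fin n → ℂ) → ℂ) : mder 0 f = f := by
  rw [mder_eq_lder]
  induction List.finRange n with
  | nil => rfl
  | cons a L ih => rw [lder_cons, ih]; rfl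

end

/-! ### Iterated partial derivatives of polynomials -/

section
open MvPolynomial
variable {n : ℕ}

lemma eval_hasFDerivAt (P : MvPolynomial (Fin n) ℂ) (z : Fin n → ℂ) :
    HasFDerivAt (fun y => eval y P)
      (∑ i, eval z (pderiv i P) • ContinuousLinearMap.proj (R := ℂ) (φ := fun _ : Fin n => ℂ) i)
      z := by
  induction P using MvPolynomial.induction_on with
  | C a =>
    simp only [eval_C]
    convert! hasFDerivAt_const (𝕜 := ℂ) a z using 1
    ext v
    simp
  | add p q hp hq =>
    have := hp.add hq
    rw [← Finset.sum_add_distrib] at this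
    simp only [← add_smul] at this
    simpa only [map_add] using! this
  | mul_X p j hp =>
    have hj : HasFDerivAt (fun y : Fin n → ℂ => y j)
        (ContinuousLinearMap.proj (R := ℂ) (φ := fun _ : Fin n => ℂ) j) z :=
      (ContinuousLinearMap.proj (R := ℂ) (φ := fun _ : Fin n => ℂ) j).hasFDerivAt
    have := hp.mul hj
    simp only [map_mul, eval_X]
    convert! this using 1
    ext v
    have hX : ∀ i, eval z (pderiv i (p * X j)) * v i
        = (if i = j then eval z p * v j else 0) + z j * (eval z (pderiv i p) * v i) := by
      intro i
      rw [Derivation.leibniz, pderiv_X]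
      by_cases hij : i = j
      · subst hij
        simp
        ring
      · simp [hij, Ne.symm hij]
        ring
    have hsum := Finset.sum_congr (rfl : (Finset.univ : Finset (Fin n)) = Finset.univ)
      fun i _ => hX i
    rw [Finset.sum_add_distrib, Finset.sum_ite_eq' Finset.univ j] at hsum
    simpa [-Derivation.leibniz, Finset.mul_sum] using hsum

lemma pder_eval (i : Fin n) (P : MvPolynomial (Fin n) ℂ) :
    pder i (fun y => eval y P) = fun y => eval y (pderiv i P) := by
  funext z
  simp only [pder, (eval_hasFDerivAt P z).fderiv]
  simp [Pi.single_apply]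

lemma eval_analyticAt (P : MvPolynomial (Fin n) ℂ) (z : Fin n → ℂ) :
    AnalyticAt ℂ (fun y => eval y P) z :=
  AnalyticOnNhd.eval_mvPolynomial (𝕜 := ℂ) P z (Set.mem_univ z)

lemma pder_iter_eval (i : Fin n) (k : ℕ) (P : MvPolynomial (Fin n) ℂ) :
    (pder i)^[k] (fun y => eval y P) = fun y => eval y ((pderiv i)^[k] P) := by
  induction k with
  | zero => rfl
  | succ k ih => rw [Function.iterate_succ_apply', Function.iterate_succ_apply', ih, pder_eval]

lemma coeff_pderiv_iter (i : Fin n) (k : ℕ) (P : MvPolynomial (Fin n) ℂ) (m : Fin n →₀ ℕ)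
    (hm : m i = 0) :
    coeff m ((pderiv i)^[k] P) = k.factorial * coeff (m + Finsupp.single i k) P := by
  induction k generalizing P with
  | zero => simp
  | succ k ih =>
    rw [Function.iterate_succ_apply, ih, coeff_pderiv, add_assoc, ← Finsupp.single_add]
    simp only [Finsupp.add_apply, hm, Finsupp.single_eq_same, zero_add, Nat.factorial_succ]
    push_cast
    ring

/-- Differentiating a polynomial along the directions in `L` gives a polynomial `Q`. Its
coefficients are controlled only at exponents vanishing on `L`, which is all that evaluation at the
origin needs and which makes the falling factorials plain factorials. -/
lemma lder_eval (L : List (Fin n)) (hL : L.Nodup) (ν : Fin n → ℕ) (P : MvPolynomial (Fin n) ℂ) :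
    ∃ Q : MvPolynomial (Fin n) ℂ, lder L ν (fun y => eval y P) = (fun y => eval y Q) ∧
      ∀ m : Fin n →₀ ℕ, (∀ a ∈ L, m a = 0) → coeff m Q =
        (L.map fun a => ((ν a).factorial : ℂ)).prod *
          coeff (m + (L.map fun a => Finsupp.single a (ν a)).sum) P := by
  induction L with
  | nil => exact ⟨P, rfl, fun m _ => by simp⟩
  | cons a L ih =>
    rw [List.nodup_cons] at hL
    obtain ⟨Q, hQ, hc⟩ := ih hL.2
    refine ⟨(pderiv a)^[ν a] Q, by rw [lder_cons, hQ, pder_iter_eval], fun m hm => ?_⟩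
    rw [coeff_pderiv_iter _ _ _ _ (hm a List.mem_cons_self), hc]
    · simp [add_assoc, mul_assoc]
    · intro b hb
      have : b ≠ a := fun h => hL.1 (h ▸ hb)
      simp [hm b (List.mem_cons_of_mem _ hb), this]

lemma mder_eval (ν : Fin n → ℕ) (P : MvPolynomial (Fin n) ℂ) :
    mder ν (fun y => eval y P) 0 =
      ((∏ i, (ν i).factorial : ℕ) : ℂ) * coeff (Finsupp.equivFunOnFinite.symm ν) P := by
  obtain ⟨Q, hQ, hc⟩ := lder_eval (List.finRange n) (List.nodup_finRange n) ν P
  have h0 := hc 0 (by simp)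
  rw [mder_eq_lder, hQ]
  have h1 : eval 0 Q = coeff 0 Q := by
    rw [← constantCoeff_eq, ← eval_zero']
    rfl
  simp only [h1, h0, zero_add]
  congr 1
  · rw [← List.ofFn_eq_map, List.prod_ofFn]
    push_cast
    rfl
  · congr 1
    rw [← List.ofFn_eq_map, List.sum_ofFn]
    ext b
    simp [Finsupp.single_apply]

end

/-! ### Growth along weighted scalings -/

section
variable {n : ℕ}

/-- A property that holds near the origin holds along the weighted scaling `t ↦ (t ^ w j * z j)`
for small `t`, uniformly for `z` in a ball. -/
lemma eventually_scaling (w : Fin n → ℕ) (hw : ∀ j, 1 ≤ w j) {p : (Fin n → ℂ) → Prop}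
    (hp : ∀ᶠ x in 𝓝 0, p x) (R : ℝ) :
    ∀ᶠ t : ℂ in 𝓝 0, ∀ z : Fin n → ℂ, ‖z‖ ≤ R → p (fun j => t ^ w j * z j) := by
  obtain ⟨ε, hε, h⟩ := Metric.eventually_nhds_iff.1 hp
  have hR : 0 < |R| + 1 := by positivity
  have hδ : 0 < min 1 (ε / (|R| + 1)) := by positivity
  refine Metric.eventually_nhds_iff.2 ⟨_, hδ, fun t ht z hz => h ?_⟩
  rw [dist_zero_right] at ht ⊢
  have ht1 : ‖t‖ ≤ 1 := (ht.trans_le (min_le_left _ _)).le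
  have ht2 : ‖t‖ * (|R| + 1) < ε := (lt_div_iff₀ hR).1 (ht.trans_le (min_le_right _ _))
  refine lt_of_le_of_lt ((pi_norm_le_iff_of_nonneg (by positivity)).2 fun j => ?_) ht2
  rw [norm_mul, norm_pow]
  have h1 : ‖t‖ ^ w j ≤ ‖t‖ := by
    simpa using pow_le_pow_of_le_one (norm_nonneg t) ht1 (hw j)
  have h2 : ‖z j‖ ≤ |R| + 1 := by
    have := norm_le_pi_norm z j
    have := le_abs_self R
    linarith
  gcongr

/-- A germ all of whose Taylor coefficients of weight below `m` vanish is `O(t ^ m)` along the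
scalings `t ↦ (t ^ w j * z j)`, uniformly for `z` in a ball. By induction on `m`: the derivative
in `t` is `∑ j, w j * t ^ (w j - 1) * z j * (∂_j g)(t ^ w z)`, each `∂_j g` vanishes to weighted
order `m - w j`, and the mean value inequality integrates the resulting bound. -/
lemma weighted_bound (w : Fin n → ℕ) (hw : ∀ j, 1 ≤ w j) (m : ℕ) :
    ∀ g : (Fin n → ℂ) → ℂ, AnalyticAt ℂ g 0 →
      (∀ ν : Fin n → ℕ, ∑ j, w j * ν j < m → mder ν g 0 = 0) → ∀ R : ℝ, ∃ C : ℝ,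
        ∀ᶠ t : ℂ in 𝓝 0, ∀ z : Fin n → ℂ, ‖z‖ ≤ R →
          ‖g (fun j => t ^ w j * z j)‖ ≤ C * ‖t‖ ^ m := by
  induction m using Nat.strong_induction_on with
  | _ m ih =>
  intro g hg hv R
  obtain rfl | ⟨m, rfl⟩ : m = 0 ∨ ∃ k, m = k + 1 := by cases m <;> simp
  · have : ∀ᶠ x in 𝓝 (0 : Fin n → ℂ), ‖g x‖ ≤ ‖g 0‖ + 1 :=
      (hg.continuousAt.norm.eventually_lt continuousAt_const (by simp)).mono fun _ h => h.le
    exact ⟨‖g 0‖ + 1, by simpa using eventually_scaling w hw this R⟩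
  have hpd : ∀ j, ∃ C : ℝ, ∀ᶠ t : ℂ in 𝓝 0, ∀ z : Fin n → ℂ, ‖z‖ ≤ R →
      ‖pder j g (fun j => t ^ w j * z j)‖ ≤ C * ‖t‖ ^ (m + 1 - w j) := by
    intro j
    refine ih _ (by have := hw j; omega) _ (pder_analyticAt j hg) (fun ν hν => ?_) R
    rw [mder_pder ν j hg]
    refine hv _ ?_
    simp only [Pi.add_apply, mul_add, Finset.sum_add_distrib, Pi.single_apply, mul_ite, mul_one,
      mul_zero, Finset.sum_ite_eq', Finset.mem_univ, if_true]
    omega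
  choose C hC using hpd
  have hg0 : g 0 = 0 := by
    have := hv 0 (by simp)
    rwa [mder_zero] at this
  have hall := (eventually_all.2 hC).and
    (eventually_scaling w hw hg.eventually_analyticAt R)
  obtain ⟨δ, hδ, hball⟩ := Metric.eventually_nhds_iff.1 hall
  refine ⟨∑ j, w j * |R| * |C j|, Metric.eventually_nhds_iff.2 ⟨min 1 δ, by positivity, ?_⟩⟩
  intro t ht z hz
  rw [dist_zero_right] at ht
  set K : ℝ := (∑ j, w j * |R| * |C j|) * ‖t‖ ^ m with hK
  set c : ℂ → Fin n → ℂ := fun s j => s ^ w j * z j with hc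
  have hder : ∀ s ∈ Metric.closedBall (0 : ℂ) ‖t‖, HasDerivWithinAt (fun s => g (c s))
      (∑ j, (w j * s ^ (w j - 1) * z j) * pder j g (c s)) (Metric.closedBall (0 : ℂ) ‖t‖) s := by
    intro s hs
    rw [mem_closedBall_zero_iff] at hs
    have hs' := hball (y := s) (by
      rw [dist_zero_right]; exact hs.trans_lt (ht.trans_le (min_le_right _ _)))
    have h1 : HasFDerivAt g (fderiv ℂ g (c s)) (c s) :=
      (hs'.2 z hz).differentiableAt.hasFDerivAt
    have h2 : HasDerivAt c (fun j => w j * s ^ (w j - 1) * z j) s :=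
      hasDerivAt_pi.2 fun j => (hasDerivAt_pow (w j) s).mul_const (z j)
    have h3 := (h1.comp_hasDerivAt s h2).hasDerivWithinAt
      (s := Metric.closedBall (0 : ℂ) ‖t‖)
    convert! h3 using 1
    conv_rhs => rw [pi_eq_sum_univ' (fun j => w j * s ^ (w j - 1) * z j)]
    rw [map_sum]
    refine Finset.sum_congr rfl fun j _ => ?_
    rw [map_smul, smul_eq_mul, pder]
  have hbd : ∀ s ∈ Metric.closedBall (0 : ℂ) ‖t‖,
      ‖∑ j, (w j * s ^ (w j - 1) * z j) * pder j g (c s)‖ ≤ K := by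
    intro s hs
    rw [mem_closedBall_zero_iff] at hs
    have hs' := hball (y := s) (by
      rw [dist_zero_right]; exact hs.trans_lt (ht.trans_le (min_le_right _ _)))
    rw [hK, Finset.sum_mul]
    refine (norm_sum_le _ _).trans (Finset.sum_le_sum fun j _ => ?_)
    have hzj : ‖z j‖ ≤ |R| := (norm_le_pi_norm z j).trans (hz.trans (le_abs_self R))
    have hp : ‖pder j g (c s)‖ ≤ |C j| * ‖s‖ ^ (m + 1 - w j) :=
      (hs'.1 j z hz).trans (by gcongr; exact le_abs_self _)
    have hs1 : ‖s‖ ≤ 1 := hs.trans (ht.trans_le (min_le_left _ _)).le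
    have hexp : ‖s‖ ^ (w j - 1) * ‖s‖ ^ (m + 1 - w j) ≤ ‖t‖ ^ m := by
      rw [← pow_add]
      refine (pow_le_pow_of_le_one (norm_nonneg s) hs1 (?_ : m ≤ _)).trans (by gcongr)
      have := hw j
      omega
    calc ‖(w j * s ^ (w j - 1) * z j) * pder j g (c s)‖
        = w j * ‖s‖ ^ (w j - 1) * ‖z j‖ * ‖pder j g (c s)‖ := by simp
      _ ≤ w j * ‖s‖ ^ (w j - 1) * |R| * (|C j| * ‖s‖ ^ (m + 1 - w j)) := by gcongr
      _ = w j * |R| * |C j| * (‖s‖ ^ (w j - 1) * ‖s‖ ^ (m + 1 - w j)) := by ring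
      _ ≤ w j * |R| * |C j| * ‖t‖ ^ m := by gcongr
  have hmv := (convex_closedBall (0 : ℂ) ‖t‖).norm_image_sub_le_of_norm_hasDerivWithin_le hder hbd
    (Metric.mem_closedBall_self (norm_nonneg t)) (y := t) (by simp)
  have hc0 : c 0 = 0 := by
    funext j
    simp [hc, Nat.one_le_iff_ne_zero.1 (hw j)]
  rw [hc0, hg0, sub_zero, sub_zero] at hmv
  rw [pow_succ, ← mul_assoc]
  exact hmv

end

/-! ### The face and the parametrization -/

section
variable {n : ℕ}

lemma mem_NDiag_of_mem_NSupp {f : (Fin n → ℂ) → ℂ} {ν : Fin n → ℕ} (h : ν ∈ NSupp f) :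
    (fun i => (ν i : ℝ)) ∈ NDiag f :=
  subset_convexHull ℝ _ ⟨ν, h, fun _ => le_rfl⟩

lemma NDiag_nonneg {f : (Fin n → ℂ) → ℂ} {x : Fin n → ℝ} (hx : x ∈ NDiag f) (i : Fin n) :
    0 ≤ x i := by
  have : NDiag f ⊆ Set.Ici (0 : Fin n → ℝ) :=
    convexHull_min (fun y ⟨ν, _, hν⟩ i => (Nat.cast_nonneg (ν i)).trans (hν i)) (convex_Ici _)
  exact this hx i

lemma ell_le {f : (Fin n → ℂ) → ℂ} {u : Fin n → ℝ} (hu : ∀ i, 0 ≤ u i) {x : Fin n → ℝ}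
    (hx : x ∈ NDiag f) : ell u (NDiag f) ≤ ∑ i, u i * x i := by
  refine csInf_le ⟨0, ?_⟩ ⟨x, hx, rfl⟩
  rintro _ ⟨y, hy, rfl⟩
  exact Finset.sum_nonneg fun i _ => mul_nonneg (hu i) (NDiag_nonneg hy i)

lemma ord1_pos {φ : ℂ → ℂ} (ha : AnalyticAt ℂ φ 0) (h0 : φ 0 = 0)
    (hne : ¬∀ᶠ t in 𝓝 (0 : ℂ), φ t = 0) : 1 ≤ ord1 φ := by
  rw [Nat.one_le_iff_ne_zero, ord1, Ne, Nat.sInf_eq_zero]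
  rintro (h | h)
  · simp [h0] at h
  · refine hne (analyticOrderAt_eq_top.1 (ENat.eq_top_iff_forall_ge.2 fun m => ?_))
    refine (natCast_le_analyticOrderAt_iff_iteratedDeriv_eq_zero ha).2 fun i _ => ?_
    by_contra hi
    exact (Set.eq_empty_iff_forall_notMem.1 h i) hi

/-- Splitting off the power `t ^ ord φ` from `φ`. -/
lemma exists_eq_pow_ord1_mul {φ : ℂ → ℂ} (ha : AnalyticAt ℂ φ 0) :
    ∃ ψ : ℂ → ℂ, ContinuousAt ψ 0 ∧ (∀ t, φ t = t ^ ord1 φ * ψ t) ∧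
      ψ 0 = iteratedDeriv (ord1 φ) φ 0 / ((ord1 φ).factorial : ℂ) := by
  obtain ⟨F, hF, h⟩ := ha.exists_eq_sum_add_pow_mul (ord1 φ + 1)
  refine ⟨fun t => iteratedDeriv (ord1 φ) φ 0 / ((ord1 φ).factorial : ℂ) + t * F t,
    continuousAt_const.add (continuousAt_id.mul hF.continuousAt), fun t => ?_, by simp⟩
  rw [h t, Finset.sum_range_succ, Finset.sum_eq_zero]
  · simp only [smul_eq_mul]
    ring
  · intro i hi
    have : iteratedDeriv i φ 0 = 0 := by
      by_contra hne
      exact Nat.notMem_of_lt_sInf (Finset.mem_range.1 hi) hne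
    simp [this]

open MvPolynomial in
/-- A polynomial all of whose monomials have weight `l` satisfies the weighted Euler-type
scaling law for its partial derivatives. -/
lemma eval_pderiv_scaling (w : Fin n → ℕ) (l : ℕ) (T : Finset (Fin n → ℕ))
    (hT : ∀ ν ∈ T, ∑ j, w j * ν j = l) (a : (Fin n → ℕ) → ℂ) (i : Fin n) (t : ℂ)
    (z : Fin n → ℂ) :
    t ^ w i * eval (fun j => t ^ w j * z j)
        (pderiv i (∑ ν ∈ T, monomial (Finsupp.equivFunOnFinite.symm ν) (a ν)))
      = t ^ l * eval z
        (pderiv i (∑ ν ∈ T, monomial (Finsupp.equivFunOnFinite.symm ν) (a ν))) := by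
  simp only [map_sum, Finset.mul_sum]
  refine Finset.sum_congr rfl fun ν hν => ?_
  rw [pderiv_monomial]
  by_cases h0 : ν i = 0
  · simp [h0]
  set μ : Fin n →₀ ℕ := Finsupp.equivFunOnFinite.symm ν - Finsupp.single i 1 with hμ
  have hsum : w i + ∑ j, w j * μ j = l := by
    rw [← hT ν hν]
    have h1 : ∀ j, w j * ν j = w j * μ j + w j * (Pi.single i 1 : Fin n → ℕ) j := by
      intro j
      rw [← mul_add]
      congr 1
      by_cases hj : j = i
      · subst hj
        simp [hμ]
        omega
      · simp [hμ, hj]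
    simp only [h1, Finset.sum_add_distrib]
    simp [Pi.single_apply, add_comm]
  have hprod : (μ.prod fun j e => (t ^ w j * z j) ^ e)
      = t ^ (∑ j, w j * μ j) * μ.prod fun j e => z j ^ e := by
    rw [Finsupp.prod_fintype _ _ (by simp), Finsupp.prod_fintype _ _ (by simp),
      ← Finset.prod_pow_eq_pow_sum, ← Finset.prod_mul_distrib]
    exact Finset.prod_congr rfl fun j _ => by rw [mul_pow, pow_mul]
  rw [eval_monomial, eval_monomial, hprod, ← hsum, pow_add]
  ring

end

/-- if `φ` is a parametrization with all coordinates nonzero,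
`w = (ord φ_i)_i`, `S = Δ(w, Γ₊(f))`, and `I = {i : (∂f/∂z_i) ∘ φ = 0}` is nonempty,
then `(∂f_S/∂z_i) ∘ (in φ) = 0` for every `i ∈ I`. -/
theorem stmt4 {n : ℕ} (hn : 2 ≤ n) (f : (Fin n → ℂ) → ℂ) (hf : IsSing f)
    (φ : Fin n → ℂ → ℂ) (hφ : IsParam φ)
    (S : Set (Fin n → ℝ))
    (hS : S = faceOf (fun i => (ord1 (φ i) : ℝ)) (NDiag f))
    (I : Set (Fin n))
    (hI : I = {i | ∀ᶠ t in 𝓝 (0 : ℂ), pder i f (fun j => φ j t) = 0})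
    (hIne : I.Nonempty) :
    ∀ i ∈ I, ∀ t : ℂ, pder i (facePoly f S) (fun j => ini1 (φ j) t) = 0 := by
  intro i hi t₀
  classical
  rw [hI] at hi
  set w : Fin n → ℕ := fun j => ord1 (φ j) with hwdef
  have hw : ∀ j, 1 ≤ w j := fun j => ord1_pos (hφ j).1 (hφ j).2.1 (hφ j).2.2
  set u : Fin n → ℝ := fun j => (w j : ℝ) with hu
  set T₀ : Set (Fin n → ℕ) := {ν | (fun j => (ν j : ℝ)) ∈ S} with hT₀
  have hcast : ∀ ν : Fin n → ℕ, ∑ j, u j * (ν j : ℝ) = ((∑ j, w j * ν j : ℕ) : ℝ) := by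
    intro ν; push_cast; rfl
  -- If the face has no lattice point then its polynomial is an empty sum.
  rcases T₀.eq_empty_or_nonempty with hempty | ⟨ν₀, hν₀⟩
  · have : facePoly f S = fun _ => 0 := by
      funext z
      have : IsEmpty {ν : Fin n → ℕ // (fun i => (ν i : ℝ)) ∈ S} :=
        ⟨fun ν => (Set.eq_empty_iff_forall_notMem.1 hempty ν.1) ν.2⟩
      simp [facePoly]
    simp [this, pder]
  set l : ℕ := ∑ j, w j * ν₀ j with hl
  have hell : ell u (NDiag f) = l := by
    have h : (fun j => (ν₀ j : ℝ)) ∈ faceOf u (NDiag f) := hS ▸ hν₀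
    rw [← h.2, hcast]
  have hTl : ∀ ν ∈ T₀, ∑ j, w j * ν j = l := by
    intro ν hν
    have h : (fun j => (ν j : ℝ)) ∈ faceOf u (NDiag f) := hS ▸ hν
    have := h.2
    rw [hell, hcast] at this
    exact_mod_cast this
  have hmem : ∀ ν ∈ NSupp f, ∑ j, w j * ν j ≤ l → ν ∈ T₀ := by
    intro ν hν hle
    have h1 := mem_NDiag_of_mem_NSupp hν
    have h2 := ell_le (u := u) (fun j => Nat.cast_nonneg _) h1
    change (fun j => (ν j : ℝ)) ∈ S
    rw [hS]
    refine ⟨h1, le_antisymm ?_ h2⟩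
    rw [hcast]
    refine le_of_le_of_eq (by exact_mod_cast hle) hell.symm
  -- Since the weights are positive, a lattice point of the face has coordinates at most `l`.
  have hfin : T₀.Finite := by
    refine (Set.finite_Iic (fun _ : Fin n => l)).subset fun ν hν j => ?_
    rw [← hTl ν hν]
    calc ν j ≤ w j * ν j := Nat.le_mul_of_pos_left _ (hw j)
      _ ≤ ∑ j, w j * ν j :=
        Finset.single_le_sum (f := fun j => w j * ν j) (fun _ _ => Nat.zero_le _)
          (Finset.mem_univ j)
  set T : Finset (Fin n → ℕ) := hfin.toFinset with hT
  have hTmem : ∀ ν, ν ∈ T ↔ ν ∈ T₀ := fun ν => hfin.mem_toFinset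
  set P : MvPolynomial (Fin n) ℂ :=
    ∑ ν ∈ T, MvPolynomial.monomial (Finsupp.equivFunOnFinite.symm ν) (coeffOf f ν) with hP
  have hface : facePoly f S = fun z => MvPolynomial.eval z P := by
    funext z
    have h1 : facePoly f S z = ∑' ν : T₀, coeffOf f ν.1 * ∏ j, z j ^ ν.1 j := rfl
    have : Fintype T₀ := hfin.fintype
    rw [h1, hP, map_sum, tsum_fintype,
      ← Finset.sum_subtype T hTmem (fun ν => coeffOf f ν * ∏ j, z j ^ ν j)]
    refine Finset.sum_congr rfl fun ν _ => ?_
    rw [MvPolynomial.eval_monomial, Finsupp.prod_fintype _ _ (by simp)]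
    rfl
  have hcoeff : ∀ ν, MvPolynomial.coeff (Finsupp.equivFunOnFinite.symm ν) P
      = if ν ∈ T then coeffOf f ν else 0 := by
    intro ν
    simp [hP, MvPolynomial.coeff_sum, MvPolynomial.coeff_monomial]
  rw [hface, pder_eval]
  set q : (Fin n → ℂ) → ℂ := fun z => MvPolynomial.eval z P with hq
  have hqa : AnalyticAt ℂ q 0 := eval_analyticAt P 0
  have hga : AnalyticAt ℂ (f - q) 0 := hf.1.sub hqa
  -- The difference of `f` and its face polynomial has no terms of weight at most `l`.
  have hvan : ∀ ν : Fin n → ℕ, ∑ j, w j * ν j ≤ l → mder ν (f - q) 0 = 0 := by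
    intro ν hν
    have h1 : mder ν (f - q) 0 = mder ν f 0 - mder ν q 0 :=
      (lder_sub (List.finRange n) ν hf.1 hqa).eq_of_nhds
    rw [h1, hq, mder_eval, hcoeff]
    split_ifs with hνT
    · have : ((∏ j, (ν j).factorial : ℕ) : ℂ) ≠ 0 :=
        Nat.cast_ne_zero.2 (Finset.prod_ne_zero_iff.2 fun j _ => Nat.factorial_ne_zero _)
      rw [coeffOf, mul_div_cancel₀ _ this, sub_self]
    · have : ν ∉ NSupp f := fun h => hνT ((hTmem ν).2 (hmem ν h hν))
      simpa [NSupp] using this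
  choose ψ hψc hψ hψ0 using fun j => exists_eq_pow_ord1_mul (hφ j).1
  -- The weighted scaling of `Z t` is the reparametrized curve `φ (t * t₀)`, and `Z 0` is the
  -- value of the initial terms at `t₀`.
  set Z : ℂ → Fin n → ℂ := fun t j => t₀ ^ w j * ψ j (t * t₀) with hZ
  have hZ0 : Z 0 = fun j => ini1 (φ j) t₀ := by
    funext j
    simp only [hZ, zero_mul, hψ0, ini1]
    ring
  have hZφ : ∀ t, (fun j => t ^ w j * Z t j) = fun j => φ j (t * t₀) := by
    intro t
    funext j
    simp only [hZ]
    rw [hψ j (t * t₀), mul_pow]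
    ring
  have hZc : ContinuousAt Z 0 := by
    refine continuousAt_pi.2 fun j => continuousAt_const.mul ?_
    have h1 : ContinuousAt (fun t : ℂ => t * t₀) 0 := by fun_prop
    exact ContinuousAt.comp (g := ψ j) (f := fun t : ℂ => t * t₀)
      (by simpa using hψc j) h1
  obtain ⟨C, hC⟩ := weighted_bound w hw (l + 1 - w i) _ (pder_analyticAt i hga)
    (fun ν hν => by
      rw [mder_pder ν i hga]
      refine hvan _ ?_
      simp only [Pi.add_apply, mul_add, Finset.sum_add_distrib, Pi.single_apply, mul_ite, mul_one,
        mul_zero, Finset.sum_ite_eq', Finset.mem_univ, if_true]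
      omega) (‖Z 0‖ + 1)
  have hZb : ∀ᶠ t in 𝓝 (0 : ℂ), ‖Z t‖ ≤ ‖Z 0‖ + 1 :=
    (hZc.norm.eventually_lt continuousAt_const (by simp)).mono fun _ h => h.le
  have hsub := pder_sub i hf.1 hqa
  have hlim0 : Tendsto (fun t : ℂ => t * t₀) (𝓝 0) (𝓝 0) := by
    have : ContinuousAt (fun t : ℂ => t * t₀) 0 := by fun_prop
    simpa [ContinuousAt] using this
  have hsmall : ∀ᶠ t : ℂ in 𝓝 0, ‖t‖ < 1 :=
    (continuous_norm.tendsto (0 : ℂ)).eventually_lt_const (by simp)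
  have hest : ∀ᶠ t in 𝓝[≠] (0 : ℂ),
      ‖MvPolynomial.eval (Z t) (MvPolynomial.pderiv i P)‖ ≤ |C| * ‖t‖ := by
    rw [eventually_nhdsWithin_iff]
    filter_upwards [hC, hZb, eventually_scaling w hw hsub (‖Z 0‖ + 1), hlim0.eventually hi, hsmall]
      with t h1 h2 h3 h4 h5 ht
    have h1 := h1 (Z t) h2
    have h3 := h3 (Z t) h2
    have h4' : pder i f (fun j => t ^ w j * Z t j) = 0 := by rw [hZφ t]; exact h4
    rw [h3, Pi.sub_apply, h4', zero_sub, norm_neg, hq, pder_eval] at h1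
    have hscale := congrArg norm
      (eval_pderiv_scaling w l T (fun ν hν => hTl ν ((hTmem ν).1 hν)) (coeffOf f) i t (Z t))
    rw [← hP, norm_mul, norm_mul, norm_pow, norm_pow] at hscale
    have ht0 : 0 < ‖t‖ := norm_pos_iff.2 ht
    have hpow : ‖t‖ ^ w i * ‖t‖ ^ (l + 1 - w i) ≤ ‖t‖ ^ (l + 1) := by
      rw [← pow_add]
      exact pow_le_pow_of_le_one ht0.le h5.le (by omega)
    refine le_of_mul_le_mul_left ?_ (pow_pos ht0 l)
    rw [← hscale]
    calc _ ≤ ‖t‖ ^ w i * (|C| * ‖t‖ ^ (l + 1 - w i)) := by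
          gcongr
          exact h1.trans (by gcongr; exact le_abs_self C)
      _ = |C| * (‖t‖ ^ w i * ‖t‖ ^ (l + 1 - w i)) := by ring
      _ ≤ |C| * ‖t‖ ^ (l + 1) := by gcongr
      _ = ‖t‖ ^ l * (|C| * ‖t‖) := by ring
  have hL1 : Tendsto (fun t => MvPolynomial.eval (Z t) (MvPolynomial.pderiv i P)) (𝓝[≠] 0)
      (𝓝 (MvPolynomial.eval (Z 0) (MvPolynomial.pderiv i P))) :=
    ((ContinuousAt.comp (eval_analyticAt (MvPolynomial.pderiv i P) (Z 0)).continuousAt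
      hZc).tendsto).mono_left nhdsWithin_le_nhds
  have hL2 : Tendsto (fun t => MvPolynomial.eval (Z t) (MvPolynomial.pderiv i P)) (𝓝[≠] 0)
      (𝓝 0) := by
    refine squeeze_zero_norm' hest ?_
    have : ContinuousAt (fun t : ℂ => |C| * ‖t‖) 0 := by fun_prop
    have h := this.tendsto
    simp only [norm_zero, mul_zero] at h
    exact h.mono_left nhdsWithin_le_nhds
  rw [← hZ0]
  exact tendsto_nhds_unique hL1 hL2
end

section
/- Let f be an isolated singularity in O_n, n ≥ 3. Then for every i ∈ {1,...,n}, the Newton boundary Γ(f) has nonempty intersection with the coordinate hyperplane {x ∈ R^n : x_i = 0}; equivalently, the support of f contains a point with i-th coordinate zero. -/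
/-!
Suppose every exponent in the support of `f` has positive `i`-th coordinate. The Taylor coefficients
of `f` with `ν i = 0` then all vanish, so `f` vanishes on `{z i = 0}` near `0`
(`eq_zero_of_mder_eq_zero`, one Taylor expansion per variable). Hence `∂_j f = 0` on this hyperplane
for `j ≠ i`, and since the singularity is isolated, `∂_i f` restricted to the hyperplane vanishes
exactly at `0`. The hyperplane has dimension `n - 1 ≥ 2`, and a holomorphic function of two
variables has no isolated zero (`no_isolated_zero`). This is a contradiction.

For the Newton boundary, a weight vector with `i`-th entry larger than `∑ j, ν j`, for some `ν` in
the support with `ν i = 0`, and all other entries `1`, attains its minimum on the diagram at an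
exponent whose `i`-th coordinate is zero.
-/

open Finset Filter Topology

lemma pder_analyticOnNhd {n : ℕ} (j : Fin n) {f : (Fin n → ℂ) → ℂ} {U : Set (Fin n → ℂ)}
    (hf : AnalyticOnNhd ℂ f U) : AnalyticOnNhd ℂ (pder j f) U := fun z hz =>
  ((ContinuousLinearMap.apply ℂ ℂ (Pi.single j (1 : ℂ) : Fin n → ℂ)).analyticAt _).comp
    (hf z hz).fderiv

lemma pder_iterate_analyticOnNhd {n : ℕ} (j : Fin n) {f : (Fin n → ℂ) → ℂ}
    {U : Set (Fin n → ℂ)} (hf : AnalyticOnNhd ℂ f U) (k : ℕ) :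
    AnalyticOnNhd ℂ ((pder j)^[k] f) U := by
  induction k with
  | zero => exact hf
  | succ k ih => rw [Function.iterate_succ_apply']; exact pder_analyticOnNhd j ih

lemma hasDerivAt_line {n : ℕ} (j : Fin n) {f : (Fin n → ℂ) → ℂ} (w : Fin n → ℂ) (t : ℂ)
    (hf : AnalyticAt ℂ f (w + t • Pi.single j 1)) :
    HasDerivAt (fun t : ℂ => f (w + t • Pi.single j 1)) (pder j f (w + t • Pi.single j 1)) t := by
  have h2 : HasDerivAt (fun t : ℂ => w + t • (Pi.single j 1 : Fin n → ℂ)) (Pi.single j 1) t := by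
    simpa using ((hasDerivAt_id t).smul_const (Pi.single j 1 : Fin n → ℂ)).const_add w
  exact hf.differentiableAt.hasFDerivAt.comp_hasDerivAt t h2

/-- An analytic function all of whose `j`-th partial derivatives vanish at `w` vanishes on the
line through `w` in direction `j`. The condition `w j = 0` keeps the centre of the disc that the
line cuts out of the (polydisc) ball at `t = 0`. -/
lemma eq_zero_on_line {n : ℕ} (j : Fin n) {f : (Fin n → ℂ) → ℂ} {R : ℝ}
    (hf : AnalyticOnNhd ℂ f (Metric.ball 0 R)) (w : Fin n → ℂ) (hw : w ∈ Metric.ball 0 R)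
    (hwj : w j = 0) (h0 : ∀ k, (pder j)^[k] f w = 0) (t : ℂ) (ht : ‖t‖ < R) :
    f (w + t • Pi.single j 1) = 0 := by
  have hR : 0 < R := (norm_nonneg t).trans_lt ht
  have mem : ∀ s ∈ Metric.ball (0 : ℂ) R,
      w + s • (Pi.single j 1 : Fin n → ℂ) ∈ Metric.ball (0 : Fin n → ℂ) R := by
    intro s hs
    rw [mem_ball_zero_iff, pi_norm_lt_iff hR] at *
    intro l
    by_cases hl : l = j
    · subst hl; simpa [hwj] using hs
    · simpa [hl] using hw l
  have key : ∀ k, ∀ s ∈ Metric.ball (0 : ℂ) R,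
      iteratedDeriv k (fun t : ℂ => f (w + t • Pi.single j 1)) s
        = (pder j)^[k] f (w + s • Pi.single j 1) := by
    intro k
    induction k with
    | zero => intro s _; simp
    | succ k ih =>
      intro s hs
      rw [iteratedDeriv_succ, Function.iterate_succ_apply',
        ← (hasDerivAt_line j w s (pder_iterate_analyticOnNhd j hf k _ (mem s hs))).deriv]
      apply Filter.EventuallyEq.deriv_eq
      filter_upwards [Metric.isOpen_ball.mem_nhds hs] with u hu using ih u hu
  have hd : DifferentiableOn ℂ (fun t : ℂ => f (w + t • Pi.single j 1)) (Metric.ball 0 R) :=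
    fun s hs => (hasDerivAt_line j w s (hf _ (mem s hs))).differentiableAt.differentiableWithinAt
  have htay := Complex.taylorSeries_eq_on_ball hd (z := t) (by simpa using ht)
  rw [← htay]
  have : ∀ k, iteratedDeriv k (fun t : ℂ => f (w + t • Pi.single j 1)) 0 = 0 := by
    intro k
    rw [key k 0 (by simpa using hR)]
    simpa using h0 k
  simp [this]

/-- Vanishing of the Taylor coefficients with `ν i = 0`, one variable at a time. The induction
appends variables at the end of `l`: the last entry of `l` is differentiated first in `mder`, so
the hypothesis for `l ++ [j]` and `f` contains that for `l` and every `∂_j^k f`, with no need to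
commute partial derivatives. -/
lemma eq_zero_of_foldr {n : ℕ} (i : Fin n) {R : ℝ} (l : List (Fin n)) :
    l.Nodup → ∀ f : (Fin n → ℂ) → ℂ, AnalyticOnNhd ℂ f (Metric.ball 0 R) →
    (∀ ν : Fin n → ℕ, ν i = 0 →
      (l.map fun i => (pder i)^[ν i]).foldr (fun g acc => g acc) f 0 = 0) →
    ∀ z ∈ Metric.ball (0 : Fin n → ℂ) R, z i = 0 → (∀ j ∉ l, z j = 0) → f z = 0 := by
  induction l using List.reverseRecOn with
  | nil =>
    intro _ f _ h z _ _ hz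
    have : z = 0 := funext fun j => hz j (by simp)
    subst this
    simpa using h 0 rfl
  | append_singleton l j ih =>
    intro hl f hf h z hzR hzi hz
    have hl' : l.Nodup ∧ j ∉ l := by
      rw [List.nodup_append] at hl
      exact ⟨hl.1, fun hj => hl.2.2 j hj j (by simp) rfl⟩
    by_cases hji : j = i
    · refine ih hl'.1 f hf ?_ z hzR hzi ?_
      · intro ν hν
        have := h ν hν
        simpa [hji, hν] using this
      · intro m hm
        by_cases hmj : m = j
        · rw [hmj, hji, hzi]
        · exact hz m (by simp [hm, hmj])
    have hR : 0 < R := Metric.pos_of_mem_ball hzR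
    rw [mem_ball_zero_iff, pi_norm_lt_iff hR] at hzR
    have hwR : Function.update z j 0 ∈ Metric.ball (0 : Fin n → ℂ) R := by
      rw [mem_ball_zero_iff, pi_norm_lt_iff hR]
      intro m
      by_cases hmj : m = j
      · subst hmj; simpa using hR
      · simpa [hmj] using hzR m
    have hder : ∀ k, (pder j)^[k] f (Function.update z j 0) = 0 := by
      intro k
      refine ih hl'.1 _ (pder_iterate_analyticOnNhd j hf k) ?_ _ hwR ?_ ?_
      · intro ν hν
        have h1 := h (Function.update ν j k) (by simp [Ne.symm hji, hν])
        have h2 : (l.map fun i => (pder i)^[Function.update ν j k i])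
            = l.map fun i => (pder i)^[ν i] := by
          apply List.map_congr_left
          intro m hm
          have : m ≠ j := fun e => hl'.2 (e ▸ hm)
          simp [this]
        rw [List.map_append, List.foldr_append, h2] at h1
        simpa using h1
      · simp [Ne.symm hji, hzi]
      · intro m hm
        by_cases hmj : m = j
        · simp [hmj]
        · simpa [hmj] using hz m (by simp [hm, hmj])
    have := eq_zero_on_line j hf _ hwR (by simp) hder (z j) (hzR j)
    convert this using 2
    ext m
    by_cases hmj : m = j
    · subst hmj; simp
    · simp [hmj]

lemma eq_zero_of_mder_eq_zero {n : ℕ} (i : Fin n) {R : ℝ} {f : (Fin n → ℂ) → ℂ}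
    (hf : AnalyticOnNhd ℂ f (Metric.ball 0 R))
    (h : ∀ ν : Fin n → ℕ, ν i = 0 → mder ν f 0 = 0) (z : Fin n → ℂ)
    (hz : z ∈ Metric.ball (0 : Fin n → ℂ) R) (hzi : z i = 0) : f z = 0 :=
  eq_zero_of_foldr i _ (List.nodup_finRange n) f hf h z hz hzi
    fun j hj => absurd (List.mem_finRange j) hj

/-- A holomorphic function of two variables has no isolated zero: by the maximum principle applied
to `s ↦ 1 / h (s, t)` for `t ≠ 0`, the lower bound of `|h|` on `{|s| = ρ, |t| ≤ ρ}` passes to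
`h (0, t)`, and letting `t → 0` also to `h 0`. -/
lemma no_isolated_zero {h : ℂ × ℂ → ℂ} {R : ℝ} (hR : 0 < R)
    (hh : DifferentiableOn ℂ h (Metric.ball 0 R))
    (hne : ∀ p ∈ Metric.ball (0 : ℂ × ℂ) R, p ≠ 0 → h p ≠ 0) : h 0 ≠ 0 := by
  intro h0
  obtain ⟨ρ, hρ, hρR⟩ := exists_between hR
  have mem : ∀ s t : ℂ, ‖s‖ ≤ ρ → ‖t‖ ≤ ρ → (s, t) ∈ Metric.ball (0 : ℂ × ℂ) R := by
    intro s t hs ht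
    rw [mem_ball_zero_iff, Prod.norm_def]
    exact max_lt (hs.trans_lt hρR) (ht.trans_lt hρR)
  have hK : IsCompact (Metric.sphere (0 : ℂ) ρ ×ˢ Metric.closedBall (0 : ℂ) ρ) :=
    (isCompact_sphere _ _).prod (isCompact_closedBall _ _)
  have hKsub : ∀ p ∈ Metric.sphere (0 : ℂ) ρ ×ˢ Metric.closedBall (0 : ℂ) ρ,
      p ∈ Metric.ball (0 : ℂ × ℂ) R ∧ p ≠ 0 := by
    rintro ⟨s, t⟩ ⟨hs, ht⟩
    simp only [mem_sphere_zero_iff_norm, mem_closedBall_zero_iff] at hs ht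
    refine ⟨mem s t hs.le ht, ?_⟩
    rintro ⟨⟩
    simp at hs
    exact hρ.ne hs
  have hKne : (Metric.sphere (0 : ℂ) ρ ×ˢ Metric.closedBall (0 : ℂ) ρ).Nonempty :=
    ⟨((ρ : ℂ), 0), by simp [abs_of_pos hρ, hρ.le]⟩
  obtain ⟨p, hpK, hp⟩ := hK.exists_isMinOn hKne
    (hh.continuousOn.norm.mono fun q hq => (hKsub q hq).1)
  have hc : 0 < ‖h p‖ := norm_pos_iff.2 (hne p (hKsub p hpK).1 (hKsub p hpK).2)
  have hlow : ∀ t : ℂ, t ≠ 0 → ‖t‖ ≤ ρ → ‖h p‖ ≤ ‖h (0, t)‖ := by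
    intro t ht0 ht
    have hnz : ∀ s : ℂ, ‖s‖ ≤ ρ → h (s, t) ≠ 0 := fun s hs =>
      hne _ (mem s t hs ht) fun e => ht0 (congrArg Prod.snd e)
    have hd : DifferentiableOn ℂ (fun s => (h (s, t))⁻¹) (Metric.closedBall 0 ρ) := by
      intro s hs
      rw [mem_closedBall_zero_iff] at hs
      have h1 := (hh _ (mem s t hs ht)).differentiableAt
        (Metric.isOpen_ball.mem_nhds (mem s t hs ht))
      have h2 : DifferentiableAt ℂ (fun s => (s, t)) s := by fun_prop
      have h3 : DifferentiableAt ℂ (fun s => h (s, t)) s := h1.comp s h2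
      exact (h3.inv (hnz s hs)).differentiableWithinAt
    have hdc : DiffContOnCl ℂ (fun s => (h (s, t))⁻¹) (Metric.ball 0 ρ) :=
      DifferentiableOn.diffContOnCl (by rwa [closure_ball _ hρ.ne'])
    have hmax := Complex.norm_le_of_forall_mem_frontier_norm_le (C := ‖h p‖⁻¹)
      Metric.isBounded_ball hdc ?_ (z := 0) (subset_closure (by simpa using hρ))
    · rw [norm_inv] at hmax
      exact (inv_le_inv₀ (norm_pos_iff.2 (hnz 0 (by simpa using hρ.le))) hc).1 hmax
    · intro s hs
      rw [frontier_ball _ hρ.ne'] at hs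
      rw [norm_inv]
      exact inv_anti₀ hc (hp (Set.mk_mem_prod hs (by simpa using ht)))
  have hcont : ContinuousAt (fun t : ℂ => ‖h (0, t)‖) 0 := by
    have h1 : ContinuousAt h (0, 0) := hh.continuousOn.continuousAt
      (Metric.isOpen_ball.mem_nhds (mem 0 0 (by simpa using hρ.le) (by simpa using hρ.le)))
    have h2 : ContinuousAt (fun t : ℂ => ((0 : ℂ), t)) 0 := by fun_prop
    exact (h1.comp_of_eq h2 rfl).norm
  have hlim : Tendsto (fun t : ℂ => ‖h (0, t)‖) (𝓝[≠] 0) (𝓝 ‖h (0, 0)‖) :=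
    hcont.tendsto.mono_left nhdsWithin_le_nhds
  have := ge_of_tendsto hlim (b := ‖h p‖) (by
    filter_upwards [self_mem_nhdsWithin,
      nhdsWithin_le_nhds (Metric.closedBall_mem_nhds (0 : ℂ) hρ)] with t ht1 ht2
    exact hlow t ht1 (by simpa using ht2))
  have h0' : h (0, 0) = 0 := h0
  rw [h0', norm_zero] at this
  exact absurd this (not_le.2 hc)

lemma exists_mem_NSupp {n : ℕ} (hn : 3 ≤ n) (f : (Fin n → ℂ) → ℂ) (hf : IsIsolSing f)
    (i : Fin n) : ∃ ν ∈ NSupp f, ν i = 0 := by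
  by_contra hcon
  have hν : ∀ ν : Fin n → ℕ, ν i = 0 → mder ν f 0 = 0 := by
    intro ν h
    by_contra h'
    exact hcon ⟨ν, h', h⟩
  obtain ⟨⟨han, -, -, hgrad⟩, r, hr, hiso⟩ := hf
  obtain ⟨R, hR, hanR⟩ := Metric.eventually_nhds_iff_ball.1 han.eventually_analyticAt
  have hfR : AnalyticOnNhd ℂ f (Metric.ball 0 R) := hanR
  have hvan := eq_zero_of_mder_eq_zero i hfR hν
  have htang : ∀ z ∈ Metric.ball (0 : Fin n → ℂ) R, z i = 0 → ∀ j ≠ i, pder j f z = 0 := by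
    intro z hz hzi j hj
    have h1 := hasDerivAt_line (f := f) j z 0 (by simpa using hfR z hz)
    have hc : ContinuousAt (fun t : ℂ => z + t • (Pi.single j 1 : Fin n → ℂ)) 0 := by fun_prop
    have h2 : (fun t : ℂ => f (z + t • Pi.single j 1)) =ᶠ[𝓝 0] fun _ => 0 := by
      have hz0 : z + (0 : ℂ) • (Pi.single j 1 : Fin n → ℂ) ∈ Metric.ball (0 : Fin n → ℂ) R := by
        simpa using hz
      filter_upwards [hc.preimage_mem_nhds (Metric.isOpen_ball.mem_nhds hz0)] with t ht
      exact hvan _ ht (by simp [hzi, Ne.symm hj])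
    have h3 := h1.deriv
    rw [h2.deriv_eq] at h3
    simpa using h3.symm
  obtain ⟨j, hj⟩ : ∃ j, j ∉ ({i} : Finset (Fin n)) := by
    by_contra! hall
    have := Finset.card_le_card (fun x _ => hall x : (Finset.univ : Finset (Fin n)) ⊆ _)
    simp at this
    omega
  obtain ⟨k, hk⟩ : ∃ k, k ∉ ({i, j} : Finset (Fin n)) := by
    by_contra! hall
    have := Finset.card_le_card (fun x _ => hall x : (Finset.univ : Finset (Fin n)) ⊆ _)
    have h2 := Finset.card_le_two (a := i) (b := j)
    simp only [Finset.card_univ, Fintype.card_fin] at this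
    omega
  simp only [Finset.mem_singleton, Finset.mem_insert, not_or] at hj hk
  -- The coordinate plane spanned by `j` and `k`, which lies in the hyperplane `z i = 0`.
  let L : ℂ × ℂ → (Fin n → ℂ) := fun p => p.1 • Pi.single j 1 + p.2 • Pi.single k 1
  have hLd : Differentiable ℂ L := by fun_prop
  have hLi : ∀ p, L p i = 0 := by
    intro p; simp [L, Ne.symm hj, Ne.symm hk.1]
  have hLj : ∀ p, L p j = p.1 := by
    intro p; simp [L, Ne.symm hk.2]
  have hLk : ∀ p, L p k = p.2 := by
    intro p; simp [L, hk.2]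
  have hLm : ∀ ρ, 0 < ρ → ∀ p ∈ Metric.ball (0 : ℂ × ℂ) ρ, ‖L p‖ < ρ := by
    intro ρ hρ p hp
    rw [mem_ball_zero_iff, Prod.norm_def, max_lt_iff] at hp
    rw [pi_norm_lt_iff hρ]
    intro m
    by_cases hmj : m = j
    · rw [hmj, hLj]; exact hp.1
    by_cases hmk : m = k
    · rw [hmk, hLk]; exact hp.2
    · simpa [L, hmj, hmk] using hρ
  have hL0 : L 0 = 0 := by simp [L]
  have hmin : 0 < min r R := lt_min hr hR
  refine no_isolated_zero (h := fun p => pder i f (L p)) hmin ?_ ?_ ?_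
  · intro p hp
    have hmem : L p ∈ Metric.ball (0 : Fin n → ℂ) R :=
      mem_ball_zero_iff.2 ((hLm _ hmin p hp).trans_le (min_le_right _ _))
    exact ((pder_analyticOnNhd i hfR _ hmem).differentiableAt.comp p
      (hLd p)).differentiableWithinAt
  · intro p hp hp0
    have hlt := hLm _ hmin p hp
    have hLp : L p ≠ 0 := by
      intro e
      apply hp0
      ext
      · rw [← hLj, e]; rfl
      · rw [← hLk, e]; rfl
    obtain ⟨m, hm⟩ := hiso (L p) (hlt.trans_le (min_le_left _ _)) hLp
    by_cases hmi : m = i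
    · rwa [hmi] at hm
    · exact absurd (htang _ (mem_ball_zero_iff.2 (hlt.trans_le (min_le_right _ _))) (hLi p) m hmi)
        hm
  · simp only [hL0]
    exact hgrad i

/-- A positive integral weight attains its minimum over the Newton diagram at a point of the
support. -/
lemma mem_faceOf_of_minimal {n : ℕ} {f : (Fin n → ℂ) → ℂ} (u : Fin n → ℕ) {μ : Fin n → ℕ}
    (hμ : μ ∈ NSupp f) (hmin : ∀ ν ∈ NSupp f, ∑ i, u i * μ i ≤ ∑ i, u i * ν i) :
    (fun i => (μ i : ℝ)) ∈ faceOf (fun i => (u i : ℝ)) (NDiag f) := by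
  have hmem : (fun i => (μ i : ℝ)) ∈ NDiag f :=
    subset_convexHull ℝ _ ⟨μ, hμ, fun _ => le_rfl⟩
  refine ⟨hmem, ?_⟩
  have hlb : ∀ v ∈ NDiag f, ∑ i, (u i : ℝ) * (μ i : ℝ) ≤ ∑ i, (u i : ℝ) * v i := by
    intro v hv
    have hconv : Convex ℝ {v : Fin n → ℝ | ∑ i, (u i : ℝ) * (μ i : ℝ) ≤ ∑ i, (u i : ℝ) * v i} :=
      convex_halfSpace_ge (f := fun v : Fin n → ℝ => ∑ i, (u i : ℝ) * v i)
        ⟨fun x y => by simp [mul_add, Finset.sum_add_distrib],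
          fun c x => by simp [Finset.mul_sum, mul_left_comm]⟩ _
    refine convexHull_min ?_ hconv hv
    rintro x ⟨ν, hν, hx⟩
    have h1 : (∑ i, (u i : ℝ) * (μ i : ℝ)) ≤ ∑ i, (u i : ℝ) * (ν i : ℝ) := by
      exact_mod_cast hmin ν hν
    exact h1.trans (Finset.sum_le_sum fun i _ => by have := hx i; gcongr)
  have hleast : IsLeast ((fun v => ∑ i, (u i : ℝ) * v i) '' NDiag f)
      (∑ i, (u i : ℝ) * (μ i : ℝ)) := by
    refine ⟨⟨_, hmem, rfl⟩, ?_⟩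
    rintro _ ⟨v, hv, rfl⟩
    exact hlb v hv
  exact hleast.csInf_eq.symm

/-- for an isolated singularity in `n ≥ 3` variables, the Newton boundary
meets every coordinate hyperplane `{x_i = 0}`; equivalently the support of `f` contains a
point with `i`-th coordinate zero. -/
theorem stmt10 {n : ℕ} (hn : 3 ≤ n) (f : (Fin n → ℂ) → ℂ) (hf : IsIsolSing f) :
    ∀ i : Fin n,
      (∃ S : Set (Fin n → ℝ), IsCompactFace f S ∧ ∃ x ∈ S, x i = 0) ∧
      (∃ ν ∈ NSupp f, ν i = 0) := by
  intro i
  obtain ⟨ν, hν, hνi⟩ := exists_mem_NSupp hn f hf i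
  refine ⟨?_, ν, hν, hνi⟩
  -- Exponents with positive `i`-th coordinate get weight at least `∑ j, ν j + 1`, more than `ν`.
  let u : Fin n → ℕ := Function.update 1 i (∑ j, ν j + 1)
  have hupos : ∀ j, 0 < u j := by
    intro j
    by_cases hj : j = i
    · subst hj; simp [u]
    · simp [u, hj]
  have huν : ∑ j, u j * ν j = ∑ j, ν j := by
    refine Finset.sum_congr rfl fun j _ => ?_
    by_cases hj : j = i
    · subst hj; simp [hνi]
    · simp [u, hj]
  obtain ⟨μ, hμ, hmin⟩ : ∃ μ ∈ NSupp f, ∀ ν ∈ NSupp f, ∑ i, u i * μ i ≤ ∑ i, u i * ν i := by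
    have hwf := (measure fun ν : Fin n → ℕ => ∑ i, u i * ν i).wf
    refine ⟨hwf.min (NSupp f) ⟨ν, hν⟩, hwf.min_mem _ _, fun κ hκ => ?_⟩
    exact not_lt.1 (hwf.not_lt_min (NSupp f) hκ)
  refine ⟨_, ⟨fun j => (u j : ℝ), fun j => Nat.cast_pos.2 (hupos j), rfl⟩, _,
    mem_faceOf_of_minimal u hμ hmin, ?_⟩
  by_contra hμi
  have hpos : 1 ≤ μ i := Nat.one_le_iff_ne_zero.2 fun e => hμi (by simp [e])
  have h1 := hmin ν hν
  have h2 : u i * μ i ≤ ∑ j, u j * μ j :=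
    Finset.single_le_sum (f := fun j => u j * μ j) (fun _ _ => Nat.zero_le _) (Finset.mem_univ i)
  have h3 : u i = ∑ j, ν j + 1 := by simp [u]
  have h4 : u i ≤ u i * μ i := Nat.le_mul_of_pos_right _ hpos
  omega
end
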